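/- Let S be a subset of Baire space ℕ^ℕ. Suppose there are families (X_{i,j})_{i,j∈ℕ} and (Y_{i,j})_{i,j∈ℕ} of subsets of ℕ^ℕ, each of which is both Fσ and Gδ, such that S = ⋃_{i∈ℕ} ⋂_{j∈ℕ} X_{i,j} and S = ⋂_{i∈ℕ} ⋃_{j∈ℕ} Y_{i,j}. Then there is a single family (Z_{i,j})_{i,j∈ℕ} of subsets of ℕ^ℕ, each of which is both Fσ and Gδ, such that S = ⋃_{i∈ℕ} ⋂_{j∈ℕ} Z_{i,j} = ⋂_{i∈ℕ} ⋃_{j∈ℕ} Z_{i,j}. (This is the n = 2 case of the paper's final Corollary, with Δ⁰₂ sets rendered as sets that are both Fσ and Gδ.) -/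

import Mathlib

/-- `A` is both Fσ (a countable union of closed sets) and Gδ (a countable
intersection of open sets). -/
def IsFsigmaGdelta (A : Set (ℕ → ℕ)) : Prop :=
  (∃ F : ℕ → Set (ℕ → ℕ), (∀ n, IsClosed (F n)) ∧ A = ⋃ n, F n) ∧
  (∃ U : ℕ → Set (ℕ → ℕ), (∀ n, IsOpen (U n)) ∧ A = ⋂ n, U n)

theorem fsgd_iff (A : Set (ℕ → ℕ)) : IsFsigmaGdelta A ↔ IsGδ Aᶜ ∧ IsGδ A := by
  unfold IsFsigmaGdelta
  rw [isGδ_iff_eq_iInter_nat, isGδ_iff_eq_iInter_nat]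
  refine and_congr ⟨?_, ?_⟩ Iff.rfl
  · rintro ⟨F, hF, rfl⟩
    exact ⟨fun n => (F n)ᶜ, fun n => (hF n).isOpen_compl, by simp⟩
  · rintro ⟨F, hF, h⟩
    exact ⟨fun n => (F n)ᶜ, fun n => (hF n).isClosed_compl, by
      rw [← Set.compl_iInter, ← h, compl_compl]⟩

theorem fsgd_biUnion (s : ℕ) (f : ℕ → Set (ℕ → ℕ)) (h : ∀ i, IsFsigmaGdelta (f i)) :
    IsFsigmaGdelta (⋃ i ∈ Set.Iic s, f i) := by
  simp only [fsgd_iff] at h ⊢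
  refine ⟨?_, IsGδ.biUnion (Set.finite_Iic s) fun i _ => (h i).2⟩
  simp only [Set.compl_iUnion]
  exact IsGδ.biInter (Set.to_countable _) fun i _ => (h i).1

theorem fsgd_compl {A : Set (ℕ → ℕ)} (h : IsFsigmaGdelta A) : IsFsigmaGdelta Aᶜ := by
  rw [fsgd_iff] at h ⊢
  rw [compl_compl]
  exact h.symm

theorem fsgd_biInter (s : ℕ) (f : ℕ → Set (ℕ → ℕ)) (h : ∀ i, IsFsigmaGdelta (f i)) :
    IsFsigmaGdelta (⋂ i ∈ Set.Iic s, f i) := by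
  have := fsgd_compl (fsgd_biUnion s (fun i => (f i)ᶜ) fun i => fsgd_compl (h i))
  simpa only [Set.compl_iUnion, compl_compl] using this

theorem fsgd_inter {A B : Set (ℕ → ℕ)} (hA : IsFsigmaGdelta A) (hB : IsFsigmaGdelta B) :
    IsFsigmaGdelta (A ∩ B) := by
  rw [fsgd_iff] at *
  rw [Set.compl_inter]
  exact ⟨hA.1.union hB.1, hA.2.inter hB.2⟩

/-- Uniform bound for finitely many witnesses. -/
theorem exists_bound (P : ℕ → ℕ → Prop) (h : ∀ i, ∃ j, P i j) (n : ℕ) :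
    ∃ N, ∀ i ≤ n, ∃ j ≤ N, P i j := by
  choose f hf using h
  exact ⟨(Finset.range (n + 1)).sup f, fun i hi =>
    ⟨f i, Finset.le_sup (Finset.mem_range.2 (by omega)), hf i⟩⟩

/-- If `S` is both a countable union of countable intersections and a countable
intersection of countable unions of sets that are both Fσ and Gδ, then a single such
family realizes both forms. -/
theorem single_fsgd_family (S : Set (ℕ → ℕ))
    (X Y : ℕ → ℕ → Set (ℕ → ℕ))
    (hX : ∀ i j, IsFsigmaGdelta (X i j)) (hY : ∀ i j, IsFsigmaGdelta (Y i j))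
    (h₁ : S = ⋃ i, ⋂ j, X i j) (h₂ : S = ⋂ i, ⋃ j, Y i j) :
    ∃ Z : ℕ → ℕ → Set (ℕ → ℕ), (∀ i j, IsFsigmaGdelta (Z i j)) ∧
      S = ⋃ i, ⋂ j, Z i j ∧ S = ⋂ i, ⋃ j, Z i j := by
  let A : ℕ → Set (ℕ → ℕ) := fun s => ⋃ i ∈ Set.Iic s,
    ((⋂ j ∈ Set.Iic s, X i j) ∩ ⋂ k ∈ Set.Iic i, ⋃ j ∈ Set.Iic s, Y k j)
  have hA : ∀ s, IsFsigmaGdelta (A s) := fun s =>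
    fsgd_biUnion s _ fun i => fsgd_inter (fsgd_biInter s _ fun j => hX i j)
      (fsgd_biInter i _ fun k => fsgd_biUnion s _ fun j => hY k j)
  have mA : ∀ s x, x ∈ A s ↔ ∃ i ≤ s, (∀ j ≤ s, x ∈ X i j) ∧
      ∀ k ≤ i, ∃ j ≤ s, x ∈ Y k j := by
    intro s x
    simp only [A, Set.mem_iUnion, Set.mem_iInter, Set.mem_inter_iff, Set.mem_Iic, exists_prop]
  have m1 : ∀ x, x ∈ S ↔ ∃ i, ∀ j, x ∈ X i j := fun x => by rw [h₁]; simp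
  have m2 : ∀ x, x ∈ S ↔ ∀ i, ∃ j, x ∈ Y i j := fun x => by rw [h₂]; simp
  have pos : ∀ x ∈ S, ∃ N, ∀ s ≥ N, x ∈ A s := by
    intro x hx
    obtain ⟨i, hi⟩ := (m1 x).1 hx
    obtain ⟨N, hN⟩ := exists_bound (fun i j => x ∈ Y i j) ((m2 x).1 hx) i
    refine ⟨max N i, fun s hs => (mA s x).2 ⟨i, by omega, fun j _ => hi j, fun k hk => ?_⟩⟩
    obtain ⟨j, hj, h⟩ := hN k hk
    exact ⟨j, by omega, h⟩
  have neg : ∀ x ∉ S, ∃ N, ∀ s ≥ N, x ∉ A s := by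
    intro x hx
    have a := hx
    have b := hx
    rw [m1] at a
    rw [m2] at b
    push Not at a b
    obtain ⟨i, hi⟩ := b
    obtain ⟨N, hN⟩ := exists_bound (fun i j => x ∉ X i j) a i
    refine ⟨N, fun s hs hxs => ?_⟩
    obtain ⟨k, hk, h1, h2⟩ := (mA s x).1 hxs
    rcases le_or_gt i k with h | h
    · obtain ⟨j, _, hj⟩ := h2 i h
      exact hi j hj
    · obtain ⟨j, hj, hj'⟩ := hN k h.le
      exact hj' (h1 j (by omega))
  refine ⟨fun i j => A (i + j), fun i j => hA _, ?_, ?_⟩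
  · ext x
    simp only [Set.mem_iUnion, Set.mem_iInter]
    constructor
    · intro hx
      obtain ⟨N, hN⟩ := pos x hx
      exact ⟨N, fun j => hN _ (by omega)⟩
    · rintro ⟨i, hi⟩
      by_contra hx
      obtain ⟨N, hN⟩ := neg x hx
      exact hN _ (by omega) (hi N)
  · ext x
    simp only [Set.mem_iUnion, Set.mem_iInter]
    constructor
    · intro hx i
      obtain ⟨N, hN⟩ := pos x hx
      exact ⟨N, hN _ (by omega)⟩
    · intro h
      by_contra hx
      obtain ⟨N, hN⟩ := neg x hx
      obtain ⟨j, hj⟩ := h N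
      exact hN _ (by omega) hj
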